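/- arXiv:2001.11676 — 2 statements merged into one kernel-verified Lean document; each statement's English description precedes it below -/
import Mathlib

section
/- Every L♮-convex function is DDM-convex. Concretely: if f : ℤⁿ → ℝ ∪ {+∞} satisfies discrete midpoint convexity f(x) + f(y) ≥ f(⌈(x+y)/2⌉) + f(⌊(x+y)/2⌋) for all x, y ∈ ℤⁿ (where ⌈·⌉ and ⌊·⌋ are applied componentwise to (x+y)/2), then f is DDM-convex. -/
open Finset

/-- Directed midpoint `μ(x,y)`: round `(xᵢ+yᵢ)/2` towards `xᵢ`, componentwise:
`μ(x,y)ᵢ = ⌈(xᵢ+yᵢ)/2⌉` if `xᵢ ≥ yᵢ`, and `μ(x,y)ᵢ = ⌊(xᵢ+yᵢ)/2⌋` if `xᵢ < yᵢ`. -/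
def dmu {n : ℕ} (x y : Fin n → ℤ) : Fin n → ℤ := fun i =>
  if y i ≤ x i then ⌈((x i + y i : ℤ) : ℚ) / 2⌉ else ⌊((x i + y i : ℤ) : ℚ) / 2⌋

/-- The ℓ∞-norm of an integer vector, as a natural number. -/
def normInf {n : ℕ} (z : Fin n → ℤ) : ℕ := Finset.univ.sup fun i => (z i).natAbs

/-- A function `f : ℤⁿ → ℝ ∪ {+∞}` is DDM-convex if
`f(x) + f(y) ≥ f(μ(x,y)) + f(μ(y,x))` for all `x, y ∈ ℤⁿ`. -/
def DDMConvexFn {n : ℕ} (f : (Fin n → ℤ) → EReal) : Prop :=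
  ∀ x y : Fin n → ℤ, f (dmu x y) + f (dmu y x) ≤ f x + f y

/-!
Write `d = x - y`. The heart of the matter is the exchange inequality
`f (x - a) + f (y + a) ≤ f x + f y`, where `a` is the indicator of the set on which `d` attains
its maximum `m ≥ 1`. Of the two halves `⌈d / 2⌉` and `⌊d / 2⌋`, one takes its maximum on exactly
the same set (which one depends on the parity of `m`), so the exchange inequality for `(x, y)`
follows from those for the two closer pairs obtained by inserting the rounded midpoints between
`x` and `y`. The midpoints shifted by `±a` still sum to `x + y`, so midpoint convexity bounds the
leftover terms.

Peeling off successive maxima then transfers `⌊d / 2⌋` from `x` to `y` wherever `d ≥ 0`, and the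
same argument with `x` and `y` exchanged treats the coordinates with `d < 0`. The resulting pair
consists of the two directed midpoints.
-/

section Midpoints

variable {ι : Type*}

/-- The componentwise rounded-up midpoint `⌈(x + y) / 2⌉`. -/
def ceilMidpoint (x y : ι → ℤ) : ι → ℤ := fun i => ⌈((x i + y i : ℤ) : ℚ) / 2⌉

/-- The componentwise rounded-down midpoint `⌊(x + y) / 2⌋`. -/
def floorMidpoint (x y : ι → ℤ) : ι → ℤ := fun i => ⌊((x i + y i : ℤ) : ℚ) / 2⌋

/-- The directed midpoint `μ(x, y)` over an arbitrary index type; `dmu` is the case `ι = Fin n`. -/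
def directedMidpoint (x y : ι → ℤ) : ι → ℤ := fun i =>
  if y i ≤ x i then ceilMidpoint x y i else floorMidpoint x y i

/-- The indicator function of the level set `{i | d i = m}`. -/
def levelIndicator (d : ι → ℤ) (m : ℤ) : ι → ℤ := fun i => if d i = m then 1 else 0

/-- The vector `⌊(x - y)⁺ / 2⌋`: what `x` gives to `y`, on the coordinates where `x` is the larger,
in passing to directed midpoints. -/
def halfExcess (x y : ι → ℤ) : ι → ℤ := fun i => max ((x i - y i) / 2) 0

lemma ceilMidpoint_apply (x y : ι → ℤ) (i : ι) : ceilMidpoint x y i = (x i + y i + 1) / 2 := by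
  have h := Rat.ceil_intCast_div_natCast (x i + y i) 2
  rw [Nat.cast_ofNat] at h
  rw [ceilMidpoint, h]
  omega

lemma floorMidpoint_apply (x y : ι → ℤ) (i : ι) : floorMidpoint x y i = (x i + y i) / 2 :=
  Rat.floor_intCast_div_natCast (x i + y i) 2

lemma ceilMidpoint_add_floorMidpoint (x y : ι → ℤ) :
    ceilMidpoint x y + floorMidpoint x y = x + y := by
  funext i
  simp only [Pi.add_apply, ceilMidpoint_apply, floorMidpoint_apply]
  omega

lemma sub_ceilMidpoint_apply (x y : ι → ℤ) (i : ι) :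
    x i - ceilMidpoint x y i = (x i - y i) / 2 := by
  rw [ceilMidpoint_apply]
  omega

lemma sub_floorMidpoint_apply (x y : ι → ℤ) (i : ι) :
    x i - floorMidpoint x y i = (x i - y i + 1) / 2 := by
  rw [floorMidpoint_apply]
  omega

lemma ceilMidpoint_sub_apply (x y : ι → ℤ) (i : ι) :
    ceilMidpoint x y i - y i = (x i - y i + 1) / 2 := by
  rw [ceilMidpoint_apply]
  omega

lemma floorMidpoint_sub_apply (x y : ι → ℤ) (i : ι) :
    floorMidpoint x y i - y i = (x i - y i) / 2 := by
  rw [floorMidpoint_apply]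
  omega

lemma levelIndicator_of_eq_div_two {d e : ι → ℤ} {k : ℤ} (hd : ∀ i, d i ≤ 2 * k)
    (he : ∀ i, e i = d i / 2) : levelIndicator e k = levelIndicator d (2 * k) := by
  funext i
  have := hd i
  have := he i
  simp only [levelIndicator]
  split_ifs <;> omega

lemma levelIndicator_of_eq_add_one_div_two {d e : ι → ℤ} {k : ℤ} (hd : ∀ i, d i ≤ 2 * k + 1)
    (he : ∀ i, e i = (d i + 1) / 2) :
    levelIndicator e (k + 1) = levelIndicator d (2 * k + 1) := by
  funext i
  have := hd i
  have := he i
  simp only [levelIndicator]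
  split_ifs <;> omega

end Midpoints

section Exchange

variable {ι R : Type*}

/-- Discrete midpoint convexity, which characterizes L♮-convexity, for functions on `ℤ^ι`. The
codomain `R` plays the role of `ℝ ∪ {+∞}`. -/
def DiscreteMidpointConvex [Add R] [LE R] (f : (ι → ℤ) → R) : Prop :=
  ∀ x y, f (ceilMidpoint x y) + f (floorMidpoint x y) ≤ f x + f y

variable {f : (ι → ℤ) → R}

lemma DiscreteMidpointConvex.le_of_add_eq [Add R] [LE R] (hf : DiscreteMidpointConvex f)
    {x y p q : ι → ℤ} (h : p + q = x + y) :
    f (ceilMidpoint x y) + f (floorMidpoint x y) ≤ f p + f q := by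
  have h_apply (i : ι) : p i + q i = x i + y i := congrFun h i
  have hceil : ceilMidpoint p q = ceilMidpoint x y := by
    funext i
    rw [ceilMidpoint_apply, ceilMidpoint_apply, h_apply]
  have hfloor : floorMidpoint p q = floorMidpoint x y := by
    funext i
    rw [floorMidpoint_apply, floorMidpoint_apply, h_apply]
  exact hceil ▸ hfloor ▸ hf p q

lemma DiscreteMidpointConvex.exchange_of_natAbs_sub_le_one [AddCommMonoid R] [Preorder R]
    (hf : DiscreteMidpointConvex f) {x y : ι → ℤ} (hxy : ∀ i, (x i - y i).natAbs ≤ 1)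
    {m : ℤ} (hm : 1 ≤ m) :
    f (x - levelIndicator (x - y) m) + f (y + levelIndicator (x - y) m) ≤ f x + f y := by
  rcases hm.eq_or_lt with rfl | hm
  · have hfloor : x - levelIndicator (x - y) 1 = floorMidpoint x y := by
      funext i
      have := hxy i
      simp only [Pi.sub_apply, levelIndicator, floorMidpoint_apply]
      split_ifs <;> omega
    have hceil : y + levelIndicator (x - y) 1 = ceilMidpoint x y := by
      funext i
      have := hxy i
      simp only [Pi.add_apply, Pi.sub_apply, levelIndicator, ceilMidpoint_apply]
      split_ifs <;> omega
    rw [hfloor, hceil, add_comm]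
    exact hf x y
  · have hzero : levelIndicator (x - y) m = 0 := by
      funext i
      have := hxy i
      exact if_neg (by rw [Pi.sub_apply]; omega)
    rw [hzero, sub_zero, add_zero]

variable [AddCommMonoid R] [Preorder R] [IsOrderedAddMonoid R]

lemma add_le_add_of_intermediate {p q r s u v x y : R}
    (huv : IsTop (u + v) ∨ AddLECancellable (u + v)) (hxy : u + v ≤ x + y) (hxu : p + r ≤ x + u)
    (hvy : s + q ≤ v + y) (hrs : u + v ≤ r + s) : p + q ≤ x + y := by
  rcases huv with htop | hcancel
  · exact (htop _).trans hxy
  · apply hcancel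
    calc
      u + v + (p + q) ≤ r + s + (p + q) := by gcongr
      _ = (p + r) + (s + q) := by abel
      _ ≤ (x + u) + (v + y) := by gcongr
      _ = u + v + (x + y) := by abel

lemma exchange_of_intermediate {G : Type*} [AddCommGroup G] {f : G → R} {x y w z a : G}
    (hcancel : IsTop (f w + f z) ∨ AddLECancellable (f w + f z)) (hwz : w + z = x + y)
    (hmin : ∀ p q, p + q = x + y → f w + f z ≤ f p + f q)
    (hxw : f (x - a) + f (w + a) ≤ f x + f w) (hzy : f (z - a) + f (y + a) ≤ f z + f y) :
    f (x - a) + f (y + a) ≤ f x + f y :=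
  add_le_add_of_intermediate hcancel (hmin x y rfl) hxw hzy
    (hmin (w + a) (z - a) (by rw [add_add_sub_cancel, hwz]))

/-- Murota's property (L♮-APR[ℤ]). When the bound `m` is not attained, the indicator vanishes, so
that the bound can later be lowered one unit at a time. -/
theorem DiscreteMidpointConvex.exchange_argmax (hf : DiscreteMidpointConvex f)
    (hcancel : ∀ x y, IsTop (f x + f y) ∨ AddLECancellable (f x + f y)) {M : ℕ} :
    ∀ {x y : ι → ℤ} {m : ℤ}, (∀ i, (x i - y i).natAbs ≤ M) → 1 ≤ m → (∀ i, x i - y i ≤ m) →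
      f (x - levelIndicator (x - y) m) + f (y + levelIndicator (x - y) m) ≤ f x + f y := by
  induction M using Nat.strong_induction_on with
  | _ M ih =>
  intro x y m hM hm hmax
  rcases le_or_gt M 1 with hM1 | hM1
  · exact hf.exchange_of_natAbs_sub_le_one (fun i => (hM i).trans hM1) hm
  have ih_half : ∀ {p q : ι → ℤ} {k : ℤ}, levelIndicator (p - q) k = levelIndicator (x - y) m →
      (∀ i, (p i - q i).natAbs ≤ (M + 1) / 2) → 1 ≤ k → (∀ i, p i - q i ≤ k) →
      f (p - levelIndicator (x - y) m) + f (q + levelIndicator (x - y) m) ≤ f p + f q :=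
    fun h hbound hk hle => h ▸ ih ((M + 1) / 2) (by omega) hbound hk hle
  rcases Int.even_or_odd' m with ⟨k, rfl | rfl⟩
  · have hhalf : ∀ {p q : ι → ℤ}, (∀ i, p i - q i = (x i - y i) / 2) →
        f (p - levelIndicator (x - y) (2 * k)) + f (q + levelIndicator (x - y) (2 * k))
          ≤ f p + f q := fun h =>
      ih_half (levelIndicator_of_eq_div_two hmax h) (fun i => by have := hM i; have := h i; omega)
        (by omega) (fun i => by have := hmax i; have := h i; omega)
    exact exchange_of_intermediate (hcancel _ _) (ceilMidpoint_add_floorMidpoint x y)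
      (fun _ _ => hf.le_of_add_eq) (hhalf (sub_ceilMidpoint_apply x y))
      (hhalf (floorMidpoint_sub_apply x y))
  · have hhalf : ∀ {p q : ι → ℤ}, (∀ i, p i - q i = (x i - y i + 1) / 2) →
        f (p - levelIndicator (x - y) (2 * k + 1)) + f (q + levelIndicator (x - y) (2 * k + 1))
          ≤ f p + f q := fun h =>
      ih_half (levelIndicator_of_eq_add_one_div_two hmax h)
        (fun i => by have := hM i; have := h i; omega) (by omega)
        (fun i => by have := hmax i; have := h i; omega)
    exact exchange_of_intermediate (hcancel _ _)
      ((add_comm _ _).trans (ceilMidpoint_add_floorMidpoint x y))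
      (fun _ _ h => (add_comm _ _).trans_le (hf.le_of_add_eq h))
      (hhalf (sub_floorMidpoint_apply x y)) (hhalf (ceilMidpoint_sub_apply x y))

end Exchange

section Transfer

variable {ι : Type*}

lemma halfExcess_eq_zero {x y : ι → ℤ} (h : ∀ i, x i - y i ≤ 1) : halfExcess x y = 0 := by
  funext i
  have := h i
  simp only [halfExcess, Pi.zero_apply]
  omega

lemma halfExcess_eq_levelIndicator_add {x y : ι → ℤ} {m : ℤ} (hm : 2 ≤ m) :
    halfExcess x y = levelIndicator (x - y) m +
      halfExcess (x - levelIndicator (x - y) m) (y + levelIndicator (x - y) m) := by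
  funext i
  simp only [halfExcess, levelIndicator, Pi.add_apply, Pi.sub_apply]
  split_ifs <;> omega

lemma sub_halfExcess_add_halfExcess (x y : ι → ℤ) :
    x - halfExcess x y + halfExcess (y + halfExcess x y) (x - halfExcess x y) =
      directedMidpoint x y := by
  funext i
  simp only [halfExcess, directedMidpoint, ceilMidpoint_apply, floorMidpoint_apply, Pi.add_apply,
    Pi.sub_apply]
  split_ifs <;> omega

lemma add_halfExcess_sub_halfExcess (x y : ι → ℤ) :
    y + halfExcess x y - halfExcess (y + halfExcess x y) (x - halfExcess x y) =
      directedMidpoint y x := by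
  funext i
  simp only [halfExcess, directedMidpoint, ceilMidpoint_apply, floorMidpoint_apply, Pi.add_apply,
    Pi.sub_apply]
  split_ifs <;> omega

variable {R : Type*} [AddCommMonoid R] [Preorder R] [IsOrderedAddMonoid R] {f : (ι → ℤ) → R}

lemma DiscreteMidpointConvex.transfer_halfExcess_of_sub_le (hf : DiscreteMidpointConvex f)
    (hcancel : ∀ x y, IsTop (f x + f y) ∨ AddLECancellable (f x + f y)) {M : ℕ} (N : ℕ) :
    ∀ {x y : ι → ℤ}, (∀ i, (x i - y i).natAbs ≤ M) → (∀ i, x i - y i ≤ N + 1) →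
      f (x - halfExcess x y) + f (y + halfExcess x y) ≤ f x + f y := by
  induction N with
  | zero =>
    intro x y _ hN
    rw [halfExcess_eq_zero (by simpa using hN), sub_zero, add_zero]
  | succ N ih =>
    intro x y hM hN
    have hsplit := halfExcess_eq_levelIndicator_add (x := x) (y := y) (m := N + 2) (by omega)
    have hpeel := hf.exchange_argmax hcancel (m := N + 2) hM (by omega)
      (fun i => (hN i).trans (by omega))
    have hsub (i : ι) : (x - levelIndicator (x - y) (N + 2)) i -
        (y + levelIndicator (x - y) (N + 2)) i =
          if x i - y i = N + 2 then x i - y i - 2 else x i - y i := by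
      simp only [levelIndicator, Pi.add_apply, Pi.sub_apply]
      split_ifs <;> omega
    have hrest := ih (x := x - levelIndicator (x - y) (N + 2))
      (y := y + levelIndicator (x - y) (N + 2))
      (fun i => by have := hM i; rw [hsub]; split_ifs <;> omega)
      (fun i => by have := hN i; rw [hsub]; split_ifs <;> omega)
    rw [sub_sub, add_assoc, ← hsplit] at hrest
    exact hrest.trans hpeel

theorem DiscreteMidpointConvex.transfer_halfExcess (hf : DiscreteMidpointConvex f)
    (hcancel : ∀ x y, IsTop (f x + f y) ∨ AddLECancellable (f x + f y)) {M : ℕ} {x y : ι → ℤ}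
    (hM : ∀ i, (x i - y i).natAbs ≤ M) :
    f (x - halfExcess x y) + f (y + halfExcess x y) ≤ f x + f y :=
  hf.transfer_halfExcess_of_sub_le hcancel M hM (fun i => by have := hM i; omega)

theorem lnatConvex_to_ddmConvex_general (hf : DiscreteMidpointConvex f)
    (hcancel : ∀ x y, IsTop (f x + f y) ∨ AddLECancellable (f x + f y)) {M : ℕ} {x y : ι → ℤ}
    (hM : ∀ i, (x i - y i).natAbs ≤ M) :
    f (directedMidpoint x y) + f (directedMidpoint y x) ≤ f x + f y := by
  have hx_to_y := hf.transfer_halfExcess hcancel hM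
  have hM' (i : ι) : ((y + halfExcess x y) i - (x - halfExcess x y) i).natAbs ≤ M := by
    have := hM i
    simp only [halfExcess, Pi.add_apply, Pi.sub_apply]
    omega
  have hy_to_x := hf.transfer_halfExcess hcancel hM'
  rw [sub_halfExcess_add_halfExcess, add_halfExcess_sub_halfExcess] at hy_to_x
  calc
    f (directedMidpoint x y) + f (directedMidpoint y x)
      = f (directedMidpoint y x) + f (directedMidpoint x y) := add_comm _ _
    _ ≤ f (y + halfExcess x y) + f (x - halfExcess x y) := hy_to_x
    _ = f (x - halfExcess x y) + f (y + halfExcess x y) := add_comm _ _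
    _ ≤ f x + f y := hx_to_y

end Transfer

lemma isTop_add_or_addLECancellable_add {a b : EReal} (ha : a ≠ ⊥) (hb : b ≠ ⊥) :
    IsTop (a + b) ∨ AddLECancellable (a + b) := by
  induction a with
  | bot => exact absurd rfl ha
  | top => exact .inl (by rw [EReal.top_add_of_ne_bot hb]; exact isTop_top)
  | coe a =>
    induction b with
    | bot => exact absurd rfl hb
    | top => exact .inl (by rw [EReal.coe_add_top]; exact isTop_top)
    | coe b => exact .inr (EReal.coe_add a b ▸ EReal.addLECancellable_coe (a + b))

lemma natAbs_apply_le_normInf {n : ℕ} (z : Fin n → ℤ) (i : Fin n) : (z i).natAbs ≤ normInf z :=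
  Finset.le_sup (f := fun i => (z i).natAbs) (Finset.mem_univ i)

/-- Every L♮-convex function is DDM-convex: if `f : ℤⁿ → ℝ ∪ {+∞}` satisfies
discrete midpoint convexity `f(x) + f(y) ≥ f(⌈(x+y)/2⌉) + f(⌊(x+y)/2⌋)`
for all `x, y ∈ ℤⁿ`, then `f` is DDM-convex. -/
theorem lnatConvex_to_ddmConvex {n : ℕ} (f : (Fin n → ℤ) → EReal)
    (hbot : ∀ x, f x ≠ ⊥)
    (hL : ∀ x y : Fin n → ℤ,
      f (fun i => ⌈((x i + y i : ℤ) : ℚ) / 2⌉) + f (fun i => ⌊((x i + y i : ℤ) : ℚ) / 2⌋)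
        ≤ f x + f y) :
    DDMConvexFn f := by
  intro x y
  exact lnatConvex_to_ddmConvex_general hL
    (fun x y => isTop_add_or_addLECancellable_add (hbot x) (hbot y))
    (natAbs_apply_le_normInf (x - y))
end

section
/- Let f : ℤⁿ → ℝ ∪ {+∞} be a DDM-convex function and α a positive integer. Then the scaled function f^α : ℤⁿ → ℝ ∪ {+∞} defined by f^α(x) = f(αx) is DDM-convex. -/
open Finset

/-! The vector `d = y - x` is the sum of its *levels*: the `k`-th level records the signs of the
coordinates of absolute value greater than `k`. A midpoint of `x` and `y` is reached from one
endpoint by adding every other level, so for DDM-convex `f` the set function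
`g S = f (x + ∑ k ∈ S, level d k)` satisfies one supermodular inequality in each interval `[A, B]`
with `2 ≤ #(B \ A)`. For `#(B \ A) = 2` these are the local inequalities from which
supermodularity follows by adding and cancelling; the larger intervals show that `g` is finite
between two sets where it is finite, which is what makes cancelling legitimate. Supermodularity
of `g` is the parallelogram inequality `f (x + s) + f (y - s) ≤ f x + f y` for every partial sum
`s` of levels. The levels of `α (y - x)` come in blocks of `|α|` equal ones, and for `s` the sum
of the even-numbered blocks the parallelogram inequality between `α x` and `α y` is the midpoint
inequality scaled by `α`. -/

section Supermodular

variable {ι : Type*} [DecidableEq ι] {g : Finset ι → EReal} {A B M P Q X : Finset ι}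

theorem eq_and_eq_or_of_card_sdiff_eq_one (hAB : #(A \ B) = 1) (hBA : #(B \ A) = 1)
    (hP : A ∩ B ⊂ P) (hQ : A ∩ B ⊂ Q) (hinter : P ∩ Q = A ∩ B) (hunion : P ∪ Q = A ∪ B) :
    A = P ∧ B = Q ∨ A = Q ∧ B = P := by
  obtain ⟨a, ha⟩ := card_eq_one.1 hAB
  have haPQ : a ∈ P ∪ Q := by
    rw [hunion]
    exact mem_union_left B (mem_sdiff.1 (ha ▸ mem_singleton_self a)).1
  wlog haP : a ∈ P generalizing P Q
  · exact (this hQ hP (by rwa [inter_comm]) (by rwa [union_comm]) (by rwa [union_comm])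
      ((mem_union.1 haPQ).resolve_left haP)).symm
  have hAP : A ⊆ P := by
    rw [← sdiff_union_inter A B, ha]
    exact union_subset (singleton_subset_iff.2 haP) hP.subset
  have hPA : #P ≤ #A := by
    have hA := card_sdiff_add_card_inter A B
    have hB := card_sdiff_add_card_inter B A
    rw [inter_comm B A] at hB
    have hAB_card := card_union_add_card_inter A B
    have hPQ_card := card_union_add_card_inter P Q
    rw [hinter, hunion] at hPQ_card
    have hQ_card := card_lt_card hQ
    lia
  obtain rfl := eq_of_subset_of_card_le hAP hPA
  rw [inter_comm, inter_comm A] at hinter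
  rw [union_comm, union_comm A] at hunion
  exact .inl ⟨rfl, (eq_of_inf_eq_sup_eq hinter hunion).symm⟩

/-- A weak form of supermodularity: each interval of sets which is not a singleton or a covering
pair contains one pair of proper relative complements satisfying the supermodular inequality. -/
def HasSupermodularSplits (g : Finset ι → EReal) : Prop :=
  ∀ ⦃A B⦄, A ⊆ B → 2 ≤ #(B \ A) →
    ∃ P Q, A ⊂ P ∧ A ⊂ Q ∧ P ∩ Q = A ∧ P ∪ Q = B ∧ g P + g Q ≤ g A + g B

namespace HasSupermodularSplits

theorem ne_top_of_subset_of_subset (hg : HasSupermodularSplits g) (hbot : ∀ S, g S ≠ ⊥)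
    (hA : g A ≠ ⊤) (hB : g B ≠ ⊤) (hAX : A ⊆ X) (hXB : X ⊆ B) : g X ≠ ⊤ := by
  induction hm : #(B \ A) using Nat.strong_induction_on generalizing A B X with | _ m ih
  subst hm
  rcases lt_or_ge #(B \ A) 2 with hlt | hge
  · have hX : X = A ∨ X = B := by
      have hsum := card_sdiff_add_card_eq_card (hAX.trans hXB)
      rcases le_or_gt #X #A with h | h
      · exact .inl (eq_of_subset_of_card_le hAX h).symm
      · exact .inr (eq_of_subset_of_card_le hXB (by lia))
    rcases hX with rfl | rfl <;> assumption
  obtain ⟨P, Q, hAP, hAQ, rfl, rfl, hle⟩ := hg (hAX.trans hXB) hge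
  obtain ⟨hP, hQ⟩ : g P ≠ ⊤ ∧ g Q ≠ ⊤ :=
    (EReal.add_ne_top_iff_ne_top₂ (hbot P) (hbot Q)).1
      (ne_top_of_le_ne_top (EReal.add_ne_top hA hB) hle)
  have hcard := card_union_add_card_inter P Q
  have hdiff := card_sdiff_add_card_eq_card (hAX.trans hXB)
  have hltP := card_lt_card hAP
  have hltQ := card_lt_card hAQ
  have hlow : g (X ∩ P) ≠ ⊤ := by
    refine ih _ ?_ hA hP (subset_inter hAX hAP.subset) inter_subset_right rfl
    have := card_sdiff_add_card_eq_card hAP.subset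
    lia
  have hhigh : g (X ∪ Q) ≠ ⊤ := by
    refine ih _ ?_ hQ hB subset_union_right (union_subset hXB subset_union_right) rfl
    have := card_sdiff_add_card_eq_card (subset_union_right (s₁ := P) (s₂ := Q))
    lia
  refine ih _ ?_ hlow hhigh inter_subset_left subset_union_left rfl
  calc #((X ∪ Q) \ (X ∩ P)) ≤ #(Q \ (P ∩ Q)) := card_le_card fun z hz ↦ by
        have := @hXB z
        have := @hAX z
        simp only [mem_sdiff, mem_union, mem_inter] at *
        tauto
    _ < #((P ∪ Q) \ (P ∩ Q)) := by
        have := card_sdiff_add_card_eq_card hAQ.subset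
        lia

theorem supermodular_of_card_sdiff_eq_one (hg : HasSupermodularSplits g)
    (hAB : #(A \ B) = 1) (hBA : #(B \ A) = 1) : g A + g B ≤ g (A ∩ B) + g (A ∪ B) := by
  have hcard : 2 ≤ #((A ∪ B) \ (A ∩ B)) := by
    have := card_sdiff_add_card_eq_card (inter_subset_union (s := A) (t := B))
    have := card_sdiff_add_card_inter A B
    have := card_sdiff_add_card B A
    rw [union_comm B A] at this
    lia
  obtain ⟨P, Q, hP, hQ, hinter, hunion, hle⟩ := hg inter_subset_union hcard
  rcases eq_and_eq_or_of_card_sdiff_eq_one hAB hBA hP hQ hinter hunion with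
    ⟨rfl, rfl⟩ | ⟨rfl, rfl⟩
  · exact hle
  · rwa [add_comm]

theorem supermodular_glue (hg : HasSupermodularSplits g) (hbot : ∀ S, g S ≠ ⊥)
    (hM : A ∩ B ⊆ M) (hMA : M ⊆ A)
    (hlower : g M + g B ≤ g (M ∩ B) + g (M ∪ B))
    (hupper : g A + g (M ∪ B) ≤ g (A ∩ (M ∪ B)) + g (A ∪ (M ∪ B))) :
    g A + g B ≤ g (A ∩ B) + g (A ∪ B) := by
  by_cases hinter : g (A ∩ B) = ⊤
  · simp only [hinter, EReal.top_add_of_ne_bot (hbot _), le_top]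
  by_cases hunion : g (A ∪ B) = ⊤
  · simp only [hunion, EReal.add_top_of_ne_bot (hbot _), le_top]
  have hfinite {X : Finset ι} (hX : A ∩ B ⊆ X) (hX' : X ⊆ A ∪ B) : g X ≠ ⊤ :=
    hg.ne_top_of_subset_of_subset hbot hinter hunion hX hX'
  have hM_ne : g M ≠ ⊤ := hfinite hM (hMA.trans subset_union_left)
  have hMB_ne : g (M ∪ B) ≠ ⊤ :=
    hfinite (hM.trans subset_union_left) (union_subset_union_left hMA)
  rw [show M ∩ B = A ∩ B by grind] at hlower
  rw [show A ∩ (M ∪ B) = M by grind, show A ∪ (M ∪ B) = A ∪ B by grind] at hupper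
  lift g M to ℝ using ⟨hM_ne, hbot _⟩ with p
  lift g (M ∪ B) to ℝ using ⟨hMB_ne, hbot _⟩ with q
  rw [← (EReal.addLECancellable_coe (p + q)).add_le_add_iff_left, EReal.coe_add]
  calc (p + q + (g A + g B) : EReal) = (p + g B) + (g A + q) := by abel
    _ ≤ (g (A ∩ B) + q) + (p + g (A ∪ B)) := add_le_add hlower hupper
    _ = p + q + (g (A ∩ B) + g (A ∪ B)) := by abel

theorem supermodular (hg : HasSupermodularSplits g) (hbot : ∀ S, g S ≠ ⊥) (A B : Finset ι) :
    g A + g B ≤ g (A ∩ B) + g (A ∪ B) := by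
  induction hm : #(A \ B) + #(B \ A) using Nat.strong_induction_on generalizing A B with | _ m ih
  subst hm
  by_cases hAB : A ⊆ B
  · rw [inter_eq_left.2 hAB, union_eq_right.2 hAB]
  by_cases hBA : B ⊆ A
  · rw [inter_eq_right.2 hBA, union_eq_left.2 hBA, add_comm]
  have hposA : 0 < #(A \ B) := card_pos.2 (sdiff_nonempty.2 hAB)
  have hposB : 0 < #(B \ A) := card_pos.2 (sdiff_nonempty.2 hBA)
  by_cases hone : #(A \ B) = 1 ∧ #(B \ A) = 1
  · exact hg.supermodular_of_card_sdiff_eq_one hone.1 hone.2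
  wlog htwo : 2 ≤ #(A \ B) generalizing A B
  · rw [add_comm (g A), inter_comm, union_comm]
    exact this B A (by simpa only [add_comm] using ih) hBA hAB hposB hposA
      (by tauto) (by lia)
  obtain ⟨a, ha⟩ := card_pos.1 hposA
  obtain ⟨haA, haB⟩ := mem_sdiff.1 ha
  refine hg.supermodular_glue hbot (M := A.erase a) (by grind) (erase_subset a A)
    (ih _ ?_ _ _ rfl) (ih _ ?_ _ _ rfl)
  · rw [show A.erase a \ B = (A \ B).erase a by grind,
      show B \ A.erase a = B \ A by grind, card_erase_of_mem ha]
    lia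
  · rw [show A \ (A.erase a ∪ B) = {a} by grind,
      show (A.erase a ∪ B) \ A = B \ A by grind, card_singleton]
    lia

end HasSupermodularSplits

end Supermodular

section Midpoint

variable {n : ℕ} {x y : Fin n → ℤ} {i : Fin n}

theorem dmu_apply (x y : Fin n → ℤ) (i : Fin n) :
    dmu x y i = if y i ≤ x i then -(-(x i + y i) / 2) else (x i + y i) / 2 := by
  have hceil := Rat.ceil_intCast_div_natCast (x i + y i) 2
  have hfloor := Rat.floor_intCast_div_natCast (x i + y i) 2
  rw [Nat.cast_ofNat] at hceil hfloor
  rw [dmu, hceil, hfloor, Nat.cast_ofNat]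

theorem dmu_add_dmu (x y : Fin n → ℤ) : dmu x y + dmu y x = x + y := by
  funext i
  simp only [Pi.add_apply, dmu_apply]
  split_ifs <;> lia

theorem dmu_apply_of_eq_add_sign_mul {d : ℤ} {c : ℕ} (h : y i = x i + d.sign * c) :
    dmu y x i = x i + d.sign * ((c + 1) / 2 : ℕ) := by
  rw [dmu_apply, h]
  rcases Int.sign_trichotomy d with hd | hd | hd <;> rw [hd] <;> split_ifs <;> lia

end Midpoint

section Level

variable {ι : Type*}

/-- The `k`-th level of an integer vector `d`: the vector of signs of those coordinates of `d`
whose absolute value exceeds `k`. Numbering starts at `0`, so `d` is the sum of its levels with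
`k < ‖d‖∞`. -/
def level (d : ι → ℤ) (k : ℕ) : ι → ℤ := fun i ↦ if k < (d i).natAbs then (d i).sign else 0

theorem sum_level_apply (d : ι → ℤ) (S : Finset ℕ) (i : ι) :
    (∑ k ∈ S, level d k) i = (d i).sign * #{k ∈ S | k < (d i).natAbs} := by
  simp only [Finset.sum_apply, level, ← sum_filter, sum_const, nsmul_eq_mul, mul_comm]

theorem natAbs_le_normInf {n : ℕ} (d : Fin n → ℤ) (i : Fin n) : (d i).natAbs ≤ normInf d :=
  le_sup (f := fun i ↦ (d i).natAbs) (mem_univ i)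

theorem sum_level_of_range_normInf_subset {n : ℕ} {d : Fin n → ℤ} {S : Finset ℕ}
    (hS : range (normInf d) ⊆ S) : ∑ k ∈ S, level d k = d := by
  funext i
  have hfilter : {k ∈ S | k < (d i).natAbs} = range (d i).natAbs := by
    ext k
    have := natAbs_le_normInf d i
    have := @hS k
    grind
  rw [sum_level_apply, hfilter, card_range, Int.sign_mul_natAbs]

end Level

section AlternateElements

/-- The elements of `D` in even position, when `D` is listed in increasing order from
position `0`. -/
def alternateElements (D : Finset ℕ) : Finset ℕ := {k ∈ D | Even #{j ∈ D | j < k}}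

theorem alternateElements_subset (D : Finset ℕ) : alternateElements D ⊆ D :=
  filter_subset _ _

theorem card_alternateElements_filter_lt (D : Finset ℕ) (t : ℕ) :
    #{k ∈ alternateElements D | k < t} = (#{k ∈ D | k < t} + 1) / 2 := by
  have hcount (t : ℕ) : #{k ∈ D | k < t} = Nat.count (· ∈ D) t := by
    rw [Nat.count_eq_card_filter_range]
    congr 1
    grind
  have halternate : #{k ∈ alternateElements D | k < t} =
      Nat.count (fun k ↦ k ∈ D ∧ Even (Nat.count (· ∈ D) k)) t := by
    simp only [alternateElements, hcount, Nat.count_eq_card_filter_range]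
    congr 1
    grind
  rw [halternate, hcount]
  clear halternate
  induction t with
  | zero => simp
  | succ t ih =>
    rw [Nat.count_succ, Nat.count_succ, ih]
    grind

theorem card_alternateElements (D : Finset ℕ) : #(alternateElements D) = (#D + 1) / 2 := by
  obtain ⟨t, ht⟩ := D.exists_nat_subset_range
  have hlt (k : ℕ) (hk : k ∈ D) : k < t := mem_range.1 (ht hk)
  have := card_alternateElements_filter_lt D t
  rwa [filter_true_of_mem hlt,
    filter_true_of_mem fun k hk ↦ hlt k (alternateElements_subset D hk)] at this

theorem dmu_add_sum_level {n : ℕ} (x d : Fin n → ℤ) (D : Finset ℕ) :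
    dmu (x + ∑ k ∈ D, level d k) x = x + ∑ k ∈ alternateElements D, level d k := by
  funext i
  rw [Pi.add_apply, sum_level_apply, card_alternateElements_filter_lt]
  exact dmu_apply_of_eq_add_sign_mul (by rw [Pi.add_apply, sum_level_apply])

end AlternateElements

section ParallelogramInequality

namespace DDMConvexFn

variable {n : ℕ} {f : (Fin n → ℤ) → EReal}

theorem hasSupermodularSplits (hf : DDMConvexFn f) (x d : Fin n → ℤ) :
    HasSupermodularSplits fun S : Finset ℕ ↦ f (x + ∑ k ∈ S, level d k) := by
  intro A B hAB hcard
  set D := B \ A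
  set O := alternateElements D
  have hOD : O ⊆ D := alternateElements_subset D
  have hO : #O = (#D + 1) / 2 := card_alternateElements D
  have hO_compl : #(D \ O) = #D - #O := card_sdiff_of_subset hOD
  have hssubset {S : Finset ℕ} (hSD : S ⊆ D) (hS : 0 < #S) : A ⊂ A ∪ S := by
    refine left_lt_sup.2 fun hSA ↦ (card_pos.1 hS).ne_empty ?_
    exact (disjoint_sdiff.symm.mono_left hSD).eq_bot_of_le hSA
  have hinter : (A ∪ O) ∩ (A ∪ D \ O) = A := by
    rw [← union_inter_distrib_left, inter_sdiff_self, union_empty]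
  have hunion : (A ∪ O) ∪ (A ∪ D \ O) = B := by
    rw [← union_union_distrib_left, union_sdiff_of_subset hOD, union_sdiff_of_subset hAB]
  have hmid : dmu (x + ∑ k ∈ B, level d k) (x + ∑ k ∈ A, level d k) =
      x + ∑ k ∈ A ∪ O, level d k := by
    rw [← union_sdiff_of_subset hAB, sum_union disjoint_sdiff, ← add_assoc, dmu_add_sum_level,
      sum_union (disjoint_sdiff.mono_right hOD), add_assoc]
  have hmid' : dmu (x + ∑ k ∈ A, level d k) (x + ∑ k ∈ B, level d k) =
      x + ∑ k ∈ A ∪ D \ O, level d k := by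
    have hsum := sum_union_inter (s₁ := A ∪ O) (s₂ := A ∪ D \ O) (f := level d)
    rw [hunion, hinter] at hsum
    rw [eq_sub_of_add_eq (dmu_add_dmu _ _), hmid]
    linear_combination hsum
  refine ⟨A ∪ O, A ∪ D \ O, hssubset hOD (by lia), hssubset sdiff_subset (by lia),
    hinter, hunion, ?_⟩
  have := hf (x + ∑ k ∈ B, level d k) (x + ∑ k ∈ A, level d k)
  rwa [hmid, hmid', add_comm (f (x + ∑ k ∈ B, level d k))] at this

theorem parallelogram_inequality (hf : DDMConvexFn f) (hbot : ∀ x, f x ≠ ⊥) (x y : Fin n → ℤ)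
    (J : Finset ℕ) :
    f (x + ∑ k ∈ J, level (y - x) k) + f (y - ∑ k ∈ J, level (y - x) k) ≤ f x + f y := by
  set K := range (normInf (y - x)) \ J
  have htotal : ∑ k ∈ J ∪ K, level (y - x) k = y - x :=
    sum_level_of_range_normInf_subset (by grind)
  have hcompl : x + ∑ k ∈ K, level (y - x) k = y - ∑ k ∈ J, level (y - x) k := by
    rw [sum_union disjoint_sdiff] at htotal
    linear_combination htotal
  have := (hf.hasSupermodularSplits x (y - x)).supermodular (fun _ ↦ hbot _) J K
  rwa [inter_sdiff_self, sum_empty, add_zero, htotal, add_sub_cancel, hcompl] at this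

end DDMConvexFn

end ParallelogramInequality

section Scaling

theorem count_even_div (a e : ℕ) :
    Nat.count (fun k ↦ Even (k / a)) (a * e) = a * ((e + 1) / 2) := by
  induction e with
  | zero => simp
  | succ e ih =>
    have hblock : Nat.count (fun k ↦ Even ((a * e + k) / a)) a = if Even e then a else 0 := by
      have hdiv {k : ℕ} (hk : k < a) : (a * e + k) / a = e := by
        rw [Nat.mul_add_div (by lia), Nat.div_eq_of_lt hk, add_zero]
      split_ifs with he
      · exact Nat.count_iff_forall.2 fun k hk ↦ by rwa [hdiv hk]
      · exact Nat.count_iff_forall_not.2 fun k hk ↦ by rwa [hdiv hk]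
    rw [Nat.mul_succ, Nat.count_add, ih, hblock]
    split_ifs with he
    · rw [show (e + 1 + 1) / 2 = (e + 1) / 2 + 1 by grind, mul_add_one]
    · rw [show (e + 1 + 1) / 2 = (e + 1) / 2 by grind, add_zero]

variable {n : ℕ}

theorem smul_dmu_eq_add_sum_level (α : ℤ) (x y : Fin n → ℤ) :
    α • dmu y x = α • x + ∑ k ∈ range (normInf (α • y - α • x)) with Even (k / α.natAbs),
      level (α • y - α • x) k := by
  funext i
  have hle := natAbs_le_normInf (α • y - α • x) i
  have hmid : dmu y x i = x i + (y i - x i).sign * (((y i - x i).natAbs + 1) / 2 : ℕ) :=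
    dmu_apply_of_eq_add_sign_mul (by rw [Int.sign_mul_natAbs]; ring)
  have hdiff : (α • y - α • x) i = α * (y i - x i) := by
    simp only [Pi.sub_apply, Pi.smul_apply, smul_eq_mul, mul_sub]
  have hcard : #{k ∈ range (normInf (α • y - α • x)) |
      Even (k / α.natAbs) ∧ k < ((α • y - α • x) i).natAbs} =
      α.natAbs * (((y i - x i).natAbs + 1) / 2) := by
    rw [← count_even_div, ← Int.natAbs_mul, ← hdiff, Nat.count_eq_card_filter_range]
    congr 1
    grind
  rw [Pi.add_apply, sum_level_apply, filter_filter, hcard, hdiff, Int.sign_mul, Nat.cast_mul,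
    Pi.smul_apply, Pi.smul_apply, smul_eq_mul, smul_eq_mul, hmid]
  linear_combination -((y i - x i).sign * (((y i - x i).natAbs + 1) / 2 : ℕ)) * α.sign_mul_natAbs

theorem ddmConvex_scaling_general (f : (Fin n → ℤ) → EReal) (hbot : ∀ x, f x ≠ ⊥)
    (hf : DDMConvexFn f) (α : ℤ) : DDMConvexFn (fun x => f (fun i => α * x i)) := by
  intro x y
  change f (α • dmu x y) + f (α • dmu y x) ≤ f (α • x) + f (α • y)
  have hcompl : α • dmu x y = α • y - (α • dmu y x - α • x) := by
    rw [eq_sub_of_add_eq (dmu_add_dmu x y)]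
    module
  have := hf.parallelogram_inequality hbot (α • x) (α • y)
    {k ∈ range (normInf (α • y - α • x)) | Even (k / α.natAbs)}
  rwa [← smul_dmu_eq_add_sum_level, eq_sub_of_add_eq' (smul_dmu_eq_add_sum_level α x y).symm,
    ← hcompl, add_comm] at this

end Scaling

/-- DDM-convexity is closed under scaling: if `f` is DDM-convex and `α` is a
positive integer, then `fᵅ(x) = f(αx)` is DDM-convex. -/
theorem ddmConvex_scaling {n : ℕ} (f : (Fin n → ℤ) → EReal)
    (hbot : ∀ x, f x ≠ ⊥) (hf : DDMConvexFn f) (α : ℤ) (hα : 0 < α) :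
    DDMConvexFn (fun x => f (fun i => α * x i)) :=
  ddmConvex_scaling_general f hbot hf α
end
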